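/- In the construction of Theorem 1: with Theta = [0, a_1, a_2, ...] badly approximable with partial quotients of degree at most M, and Phi = [0, a_{n_1}, ..., a_1, t_1, a_{n_2}, ..., a_1, t_2, ...] with deg t_j in {M+1, M+2}, let s_{m_j} be the denominator of the m_j-th convergent of Phi (m_j = n_1+...+n_j+(j-1)). Then ||s_{m_j} Theta|| <= 2^{deg s_{m_j} - 2 deg q_{n_j}} <= |s_{m_j}|^{-1} * 2^{2(M+2)(m_j - n_j)}, where q_{n_j} is the n_j-th convergent denominator of Theta. -/

import Mathlib

open Polynomial Filter

noncomputable section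
open scoped Classical

namespace Littlewood

variable (k : Type*) [Field k]

/-- The element `X` of `k((X⁻¹))`: the inverse of the Laurent-series variable `t = X⁻¹`. -/
def XLS : LaurentSeries k := (HahnSeries.single (1 : ℤ) (1 : k))⁻¹

variable {k}

/-- Embedding of `k[X]` into `k((X⁻¹))`, sending the polynomial variable to `X`. -/
def emb (p : Polynomial k) : LaurentSeries k := Polynomial.aeval (XLS k) p

/-- The degree of a Laurent series in `X⁻¹`: if `F = ∑_{h ≥ -m} f_h X^{-h}` with
`f_{-m} ≠ 0` then `deg F = m`. -/
def deg (F : LaurentSeries k) : ℤ := -F.order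

/-- The norm `|F| = 2 ^ deg F`, with `|0| = 0`. -/
def lnorm (F : LaurentSeries k) : ℝ := if F = 0 then 0 else (2 : ℝ) ^ (deg F)

/-- Fractional part: the part of the series comprising only negative powers of `X`. -/
def frac (F : LaurentSeries k) : LaurentSeries k where
  coeff n := if 1 ≤ n then F.coeff n else 0
  isPWO_support' := F.isPWO_support'.mono (fun n hn => by
    simp only [Function.mem_support] at hn ⊢
    intro h
    exact hn (by simp [h]))

/-- `‖F‖`: the norm of the fractional part of `F`. -/
def fnorm (F : LaurentSeries k) : ℝ := lnorm (frac F)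

/-- `F` is a rational function. -/
def IsRat (F : LaurentSeries k) : Prop :=
  ∃ p q : Polynomial k, q ≠ 0 ∧ F * emb q = emb p

/-- The polynomial part of a Laurent series (the part with nonnegative powers of `X`). -/
def polyPart (F : LaurentSeries k) : Polynomial k :=
  ∑ i ∈ Finset.range ((-F.order).toNat + 1), Polynomial.C (F.coeff (-(i : ℤ))) * Polynomial.X ^ i

/-- The complete quotients of the continued fraction algorithm applied to `F`. -/
def cfRem (F : LaurentSeries k) : ℕ → LaurentSeries k
  | 0 => F
  | n + 1 => (cfRem F n - emb (polyPart (cfRem F n)))⁻¹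

/-- The partial quotients of the continued fraction expansion of `F`. -/
def pq (F : LaurentSeries k) (n : ℕ) : Polynomial k := polyPart (cfRem F n)

/-- Denominators `q_n` of the convergents of the continued fraction with
partial quotients `a`. -/
def den (a : ℕ → Polynomial k) : ℕ → Polynomial k
  | 0 => 1
  | 1 => a 1
  | n + 2 => a (n + 2) * den a (n + 1) + den a n

/-- Numerators `p_n` of the convergents. -/
def num (a : ℕ → Polynomial k) : ℕ → Polynomial k
  | 0 => a 0
  | 1 => a 1 * a 0 + 1
  | n + 2 => a (n + 2) * num a (n + 1) + num a n

/-- The value of a finite continued fraction `[b_0, b_1, …, b_m]` over `k[X]`. -/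
def finCF : List (Polynomial k) → LaurentSeries k
  | [] => 0
  | [b] => emb b
  | b :: l => emb b + (finCF l)⁻¹

/-- `F` is badly approximable. -/
def Bad (F : LaurentSeries k) : Prop :=
  ∃ c : ℝ, 0 < c ∧ ∀ q : Polynomial k, q ≠ 0 → c ≤ lnorm (emb q) * fnorm (emb q * F)

theorem XLS_pow (i : ℕ) : XLS k ^ i = HahnSeries.single (-(i : ℤ)) (1 : k) := by
  have h : XLS k = HahnSeries.single (-1 : ℤ) (1 : k) := by
    rw [XLS, HahnSeries.inv_single, inv_one]
  rw [h, HahnSeries.single_pow]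
  simp

theorem emb_eq_sum (p : Polynomial k) :
    emb p = p.sum fun i c => HahnSeries.single (-(i : ℤ)) c := by
  rw [emb, aeval_eq_sum_range, Polynomial.sum_over_range _ (by simp)]
  refine Finset.sum_congr rfl fun i _ => ?_
  rw [XLS_pow, Algebra.smul_def, HahnSeries.algebraMap_apply']
  simp [HahnSeries.single_mul_single]

theorem emb_coeff_neg (p : Polynomial k) (i : ℕ) : (emb p).coeff (-(i : ℤ)) = p.coeff i := by
  rw [emb_eq_sum, Polynomial.sum, HahnSeries.coeff_sum]
  simp only [HahnSeries.coeff_single, neg_inj, Nat.cast_inj]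
  rw [Finset.sum_ite_eq]
  simp only [mem_support_iff, ne_eq, ite_not]
  split_ifs with h
  · exact h.symm
  · rfl

theorem emb_coeff_pos (p : Polynomial k) {z : ℤ} (hz : 1 ≤ z) : (emb p).coeff z = 0 := by
  rw [emb_eq_sum, Polynomial.sum, HahnSeries.coeff_sum]
  refine Finset.sum_eq_zero fun i _ => HahnSeries.coeff_single_of_ne ?_
  omega

theorem emb_coeff_eq_zero (p : Polynomial k) {z : ℤ} (hz : z < -(p.natDegree : ℤ)) :
    (emb p).coeff z = 0 := by
  obtain ⟨i, rfl⟩ : ∃ i : ℕ, z = -(i : ℤ) := ⟨(-z).toNat, by omega⟩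
  rw [emb_coeff_neg]
  exact coeff_eq_zero_of_natDegree_lt (by omega)

theorem emb_ne_zero {p : Polynomial k} (hp : p ≠ 0) : emb p ≠ 0 := fun h => hp <| by
  ext i
  rw [← emb_coeff_neg, h, HahnSeries.coeff_zero, coeff_zero]

theorem le_order_of_coeff {F : LaurentSeries k} (hF : F ≠ 0) {d : ℤ}
    (h : ∀ i < d, F.coeff i = 0) : d ≤ F.order := by
  by_contra! hlt
  exact hF (HahnSeries.coeff_order_eq_zero.mp (h _ hlt))

theorem lnorm_le_of_coeff {F : LaurentSeries k} {d : ℤ} (h : ∀ i < d, F.coeff i = 0) :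
    lnorm F ≤ (2 : ℝ) ^ (-d) := by
  unfold lnorm
  split_ifs with hF
  · positivity
  · exact zpow_le_zpow_right₀ (by norm_num) (neg_le_neg (le_order_of_coeff hF h))

theorem coeff_mul_eq_zero {F G : LaurentSeries k} {d e : ℤ} (hF : ∀ i < d, F.coeff i = 0)
    (hG : ∀ i < e, G.coeff i = 0) : ∀ i < d + e, (F * G).coeff i = 0 := by
  intro i hi
  rcases eq_or_ne F 0 with rfl | hF0
  · simp
  rcases eq_or_ne G 0 with rfl | hG0
  · simp
  apply HahnSeries.coeff_eq_zero_of_lt_order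
  rw [HahnSeries.order_mul hF0 hG0]
  have := le_order_of_coeff hF0 hF
  have := le_order_of_coeff hG0 hG
  omega

theorem lnorm_emb {p : Polynomial k} (hp : p ≠ 0) :
    lnorm (emb p) = (2 : ℝ) ^ (p.natDegree : ℤ) := by
  have h₁ : -(p.natDegree : ℤ) ≤ (emb p).order :=
    le_order_of_coeff (emb_ne_zero hp) fun _ => emb_coeff_eq_zero p
  have h₂ : (emb p).order ≤ -(p.natDegree : ℤ) :=
    HahnSeries.order_le_of_coeff_ne_zero (by rw [emb_coeff_neg]; simpa using hp)
  rw [lnorm, if_neg (emb_ne_zero hp), deg, le_antisymm h₂ h₁, neg_neg]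

theorem polyPart_coeff (F : LaurentSeries k) (i : ℕ) :
    (polyPart F).coeff i = F.coeff (-(i : ℤ)) := by
  rw [polyPart, finsetSum_coeff]
  simp only [coeff_C_mul, coeff_X_pow, mul_ite, mul_one, mul_zero]
  rw [Finset.sum_ite_eq]
  split_ifs with h
  · rfl
  · rw [Finset.mem_range] at h
    exact (HahnSeries.coeff_eq_zero_of_lt_order (by omega)).symm

theorem sub_emb_polyPart (F : LaurentSeries k) : F - emb (polyPart F) = frac F := by
  ext z
  rw [HahnSeries.coeff_sub]
  change _ = if 1 ≤ z then F.coeff z else 0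
  split_ifs with hz
  · rw [emb_coeff_pos _ hz, sub_zero]
  · obtain ⟨i, rfl⟩ : ∃ i : ℕ, z = -(i : ℤ) := ⟨(-z).toNat, by omega⟩
    rw [emb_coeff_neg, polyPart_coeff, sub_self]

theorem frac_sub_emb (F : LaurentSeries k) (p : Polynomial k) : frac (F - emb p) = frac F := by
  ext z
  change (if 1 ≤ z then (F - emb p).coeff z else 0) = if 1 ≤ z then F.coeff z else 0
  split_ifs with hz
  · rw [HahnSeries.coeff_sub, emb_coeff_pos _ hz, sub_zero]
  · rfl

theorem fnorm_le_of_coeff_sub {F : LaurentSeries k} (p : Polynomial k) {d : ℤ}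
    (h : ∀ i < d, (F - emb p).coeff i = 0) : fnorm F ≤ (2 : ℝ) ^ (-d) := by
  rw [fnorm, ← frac_sub_emb F p]
  refine lnorm_le_of_coeff fun i hi => ?_
  change (if 1 ≤ i then (F - emb p).coeff i else 0) = 0
  rw [h i hi, ite_self]

theorem natDegree_polyPart {F : LaurentSeries k} (hF : F ≠ 0) (h : F.order ≤ 0) :
    ((polyPart F).natDegree : ℤ) = -F.order := by
  obtain ⟨d, hd⟩ : ∃ d : ℕ, F.order = -(d : ℤ) := ⟨(-F.order).toNat, by omega⟩
  rw [hd, neg_neg, Nat.cast_inj]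
  refine natDegree_eq_of_le_of_coeff_ne_zero ?_ ?_
  · rw [natDegree_le_iff_coeff_eq_zero]
    intro i hi
    rw [polyPart_coeff]
    exact HahnSeries.coeff_eq_zero_of_lt_order (by omega)
  · rw [polyPart_coeff, ← hd]
    exact mt HahnSeries.coeff_order_eq_zero.mp hF

theorem not_isRat_inv {F : LaurentSeries k} (hF : ¬ IsRat F) : ¬ IsRat F⁻¹ := by
  rintro ⟨p, q, hq, h⟩
  have hF0 : F ≠ 0 := by
    rintro rfl
    exact hF ⟨0, 1, one_ne_zero, by simp [emb]⟩
  refine hF ⟨q, p, ?_, ?_⟩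
  · rintro rfl
    rw [show emb (0 : Polynomial k) = 0 from map_zero _] at h
    exact mul_ne_zero (inv_ne_zero hF0) (emb_ne_zero hq) h
  · rw [← h, mul_inv_cancel_left₀ hF0]

theorem not_isRat_sub_emb {F : LaurentSeries k} (hF : ¬ IsRat F) (r : Polynomial k) :
    ¬ IsRat (F - emb r) := by
  rintro ⟨p, q, hq, h⟩
  refine hF ⟨p + r * q, q, hq, ?_⟩
  have : emb (p + r * q) = emb p + emb r * emb q := by simp [emb]
  rw [this, ← h]
  ring

theorem not_isRat_cfRem {F : LaurentSeries k} (hF : ¬ IsRat F) (i : ℕ) :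
    ¬ IsRat (cfRem F i) := by
  induction i with
  | zero => exact hF
  | succ i ih => exact not_isRat_inv (not_isRat_sub_emb ih _)

theorem frac_ne_zero {F : LaurentSeries k} (hF : ¬ IsRat F) : frac F ≠ 0 := fun h => hF
  ⟨polyPart F, 1, one_ne_zero, by
    rw [← sub_emb_polyPart, sub_eq_zero] at h
    rw [← h, show emb (1 : Polynomial k) = 1 from map_one _, mul_one]⟩

theorem natDegree_pq_succ {F : LaurentSeries k} (hF : ¬ IsRat F) (i : ℕ) :
    ((pq F (i + 1)).natDegree : ℤ) = (frac (cfRem F i)).order ∧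
      1 ≤ (pq F (i + 1)).natDegree := by
  have h0 := frac_ne_zero (not_isRat_cfRem hF i)
  have h1 : 1 ≤ (frac (cfRem F i)).order := le_order_of_coeff h0 fun z hz => if_neg (by omega)
  have hinv : ((frac (cfRem F i))⁻¹).order = -(frac (cfRem F i)).order := by
    have := HahnSeries.order_mul h0 (inv_ne_zero h0)
    rw [mul_inv_cancel₀ h0, HahnSeries.order_one] at this
    omega
  have h2 : ((pq F (i + 1)).natDegree : ℤ) = (frac (cfRem F i)).order := by
    rw [pq, cfRem, sub_emb_polyPart, natDegree_polyPart (inv_ne_zero h0) (by omega), hinv,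
      neg_neg]
  exact ⟨h2, by omega⟩

/-- The denominators of the convergents with the index shifted by one, so that the initial
value `q_{-1} = 0` is included. -/
def den' (a : ℕ → Polynomial k) : ℕ → Polynomial k
  | 0 => 0
  | i + 1 => den a i

/-- The numerators of the convergents with the index shifted by one, so that the initial
value `p_{-1} = 1` is included. -/
def num' (a : ℕ → Polynomial k) : ℕ → Polynomial k
  | 0 => 1
  | i + 1 => num a i

theorem den'_add_two (a : ℕ → Polynomial k) (i : ℕ) :
    den' a (i + 2) = a (i + 1) * den' a (i + 1) + den' a i := by
  cases i <;> simp [den', den]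

theorem num'_add_two (a : ℕ → Polynomial k) (i : ℕ) :
    num' a (i + 2) = a (i + 1) * num' a (i + 1) + num' a i := by
  cases i <;> simp [num', num]

theorem degree_den'_lt {a : ℕ → Polynomial k} (ha : ∀ i, 1 ≤ (a (i + 1)).natDegree) (i : ℕ) :
    (den' a i).degree < (den' a (i + 1)).degree := by
  induction i with
  | zero => simp [den', den]
  | succ i ih =>
    have h0 : den' a (i + 1) ≠ 0 := by
      intro h
      simp [h] at ih
    have hlt : (den' a (i + 1)).degree < (a (i + 1) * den' a (i + 1)).degree := by
      rw [degree_eq_natDegree h0, degree_eq_natDegree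
        (mul_ne_zero (ne_zero_of_natDegree_gt (ha i)) h0),
        natDegree_mul (ne_zero_of_natDegree_gt (ha i)) h0]
      exact_mod_cast Nat.lt_add_of_pos_left (ha i)
    rw [den'_add_two, degree_add_eq_left_of_degree_lt (ih.trans hlt)]
    exact hlt

theorem den_ne_zero {a : ℕ → Polynomial k} (ha : ∀ i, 1 ≤ (a (i + 1)).natDegree) (i : ℕ) :
    den a i ≠ 0 := by
  intro h
  have := degree_den'_lt ha i
  simp [den', h] at this

theorem natDegree_den_succ {a : ℕ → Polynomial k} (ha : ∀ i, 1 ≤ (a (i + 1)).natDegree) (i : ℕ) :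
    (den a (i + 1)).natDegree = (a (i + 1)).natDegree + (den a i).natDegree := by
  have h0 : a (i + 1) ≠ 0 := ne_zero_of_natDegree_gt (ha i)
  have hle : (den' a (i + 1)).degree ≤ (a (i + 1) * den' a (i + 1)).degree := by
    rw [mul_comm]
    exact degree_le_mul_left _ h0
  change (den' a (i + 2)).natDegree = _
  rw [den'_add_two, natDegree_add_eq_left_of_degree_lt
    ((degree_den'_lt ha i).trans_le hle)]
  exact natDegree_mul h0 (den_ne_zero ha i)

/-- The mirror formula: if `b_{u+1}, …, b_{u+n}` is the reversal of `a_1, …, a_n`, then the last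
two continuants of `b_1, …, b_{u+n}` split at `u`, with the continuants of `a` as coefficients. -/
theorem den'_mirror {a b : ℕ → Polynomial k} (h0 : a 0 = 0) {n : ℕ} : ∀ {u : ℕ},
    (∀ i, 1 ≤ i → i ≤ n → b (u + i) = a (n + 1 - i)) →
    den' b (u + n + 1) = den' a (n + 1) * den' b (u + 1) + den' a n * den' b u ∧
      den' b (u + n) = num' a (n + 1) * den' b (u + 1) + num' a n * den' b u := by
  induction n with
  | zero => intro u _; simp [den', num', den, num, h0]
  | succ n ih =>
    intro u h
    obtain ⟨h₁, h₂⟩ := @ih (u + 1) fun i hi hin => by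
      have := h (i + 1) (by omega) (by omega)
      rw [show u + 1 + i = u + (i + 1) by omega, this]
      congr 1
      omega
    have hb : b (u + 1) = a (n + 1) := h 1 le_rfl (by omega)
    rw [show u + 1 + n = u + (n + 1) by omega] at h₁ h₂
    rw [h₁, h₂, den'_add_two b u, den'_add_two a n, num'_add_two a n, hb]
    constructor <;> ring

theorem coeff_den'_mul_sub_num' {F : LaurentSeries k} (hF : ¬ IsRat F) (i : ℕ) :
    ∀ z < ((den (pq F) i).natDegree : ℤ),
      (emb (den' (pq F) i) * F - emb (num' (pq F) i)).coeff z = 0 := by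
  have hrec : ∀ i, emb (den' (pq F) (i + 1)) * F - emb (num' (pq F) (i + 1)) =
      -(emb (den' (pq F) i) * F - emb (num' (pq F) i)) * frac (cfRem F i) := by
    intro i
    induction i with
    | zero =>
      rw [← sub_emb_polyPart]
      simp [den', num', den, num, emb, pq, cfRem]
    | succ i ih =>
      have hne := frac_ne_zero (not_isRat_cfRem hF i)
      have hα : cfRem F (i + 1) * frac (cfRem F i) = 1 := by
        rw [cfRem, sub_emb_polyPart, inv_mul_cancel₀ hne]
      have hadd : ∀ p q r : Polynomial k, emb (p * q + r) = emb p * emb q + emb r := by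
        simp [emb]
      rw [den'_add_two, num'_add_two, hadd, hadd, ← sub_emb_polyPart (cfRem F (i + 1))]
      change _ = _ * (_ - emb (pq F (i + 1)))
      linear_combination (cfRem F (i + 1)) * ih -
        (emb (den' (pq F) i) * F - emb (num' (pq F) i)) * hα
  induction i with
  | zero =>
    intro z hz
    have : (1 : Polynomial k).natDegree = 0 := natDegree_one
    simp only [den, this, Nat.cast_zero] at hz
    simp [den', num', emb, hz.ne]
  | succ i ih =>
    rw [hrec, neg_mul, natDegree_den_succ fun i => (natDegree_pq_succ hF i).2]
    intro z hz
    rw [HahnSeries.coeff_neg, neg_eq_zero]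
    refine coeff_mul_eq_zero ih (e := (frac (cfRem F i)).order)
      (fun _ => HahnSeries.coeff_eq_zero_of_lt_order) z ?_
    rw [← (natDegree_pq_succ hF i).1]
    push_cast at hz
    omega

theorem natDegree_den_le {a : ℕ → Polynomial k} (ha : ∀ i, 1 ≤ (a (i + 1)).natDegree) {B u : ℕ}
    (h : ∀ i, 1 ≤ i → i ≤ u → (a i).natDegree ≤ B) : (den a u).natDegree ≤ B * u := by
  induction u with
  | zero => simp [den]
  | succ u ih =>
    have h₁ := ih fun i hi hiu => h i hi (by omega)
    have h₂ := h (u + 1) (by omega) le_rfl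
    rw [natDegree_den_succ ha, mul_add]
    omega

theorem theorem1_key_estimate {k : Type*} [Field k] (Θ Φ : LaurentSeries k)
    (hΘ : ¬ IsRat Θ) (hΦ : ¬ IsRat Φ) (hnorm : lnorm Θ ≤ 1 / 2) (h0 : pq Θ 0 = 0)
    (M : ℕ) (hdeg : ∀ i : ℕ, (pq Θ i).natDegree ≤ M)
    (n : ℕ → ℕ) (hn : ∀ j : ℕ, 1 ≤ n j)
    (t : ℕ → Polynomial k)
    (ht : ∀ j : ℕ, (t j).natDegree = M + 1 ∨ (t j).natDegree = M + 2)
    (m : ℕ → ℕ) (hm : ∀ j : ℕ, m j = (∑ i ∈ Finset.Icc 1 j, n i) + (j - 1))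
    (hΦ0 : pq Φ 0 = 0)
    (hblock : ∀ j : ℕ, 1 ≤ j → ∀ i : ℕ, 1 ≤ i → i ≤ n j →
      pq Φ (m j - n j + i) = pq Θ (n j + 1 - i))
    (ht' : ∀ j : ℕ, 1 ≤ j → pq Φ (m j + 1) = t j)
    (j : ℕ) (hj : 1 ≤ j) :
    fnorm (emb (den (pq Φ) (m j)) * Θ) ≤
        (2 : ℝ) ^ (((den (pq Φ) (m j)).natDegree : ℤ)
          - 2 * ((den (pq Θ) (n j)).natDegree : ℤ)) ∧
      (2 : ℝ) ^ (((den (pq Φ) (m j)).natDegree : ℤ)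
          - 2 * ((den (pq Θ) (n j)).natDegree : ℤ)) ≤
        (lnorm (emb (den (pq Φ) (m j))))⁻¹ * (2 : ℝ) ^ (2 * (M + 2) * (m j - n j)) := by
  have ha : ∀ i, 1 ≤ (pq Θ (i + 1)).natDegree := fun i => (natDegree_pq_succ hΘ i).2
  have hb : ∀ i, 1 ≤ (pq Φ (i + 1)).natDegree := fun i => (natDegree_pq_succ hΦ i).2
  have hm1 : m 1 = n 1 := by simp [hm]
  have hms : ∀ l, 1 ≤ l → m (l + 1) = m l + 1 + n (l + 1) := by
    intro l hl
    rw [hm, hm, Finset.sum_Icc_succ_top (by omega)]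
    omega
  have hbound : ∀ l, 1 ≤ l → ∀ i, 1 ≤ i → i ≤ m l → (pq Φ i).natDegree ≤ M + 2 := by
    intro l hl
    have hfin : ∀ l, 1 ≤ l → ∀ i, m l - n l < i → i ≤ m l → n l ≤ m l →
        (pq Φ i).natDegree ≤ M + 2 := by
      intro l hl i h₁ h₂ h₃
      have := hblock l hl (i - (m l - n l)) (by omega) (by omega)
      rw [Nat.add_sub_cancel' h₁.le] at this
      rw [this]
      exact (hdeg _).trans (by omega)
    induction l, hl using Nat.le_induction with
    | base => exact fun i h₁ h₂ => hfin 1 le_rfl i (by omega) h₂ hm1.ge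
    | succ l hl ih =>
      intro i h₁ h₂
      have hl' := hms l hl
      rcases lt_trichotomy i (m l + 1) with h | rfl | h
      · exact ih i h₁ (by omega)
      · rw [ht' l hl]
        rcases ht l with h | h <;> omega
      · exact hfin (l + 1) (by omega) i (by omega) h₂ (by omega)
  have hnm : n j ≤ m j := by
    rw [hm]
    exact (Finset.single_le_sum (f := n) (fun _ _ => Nat.zero_le _)
      (Finset.mem_Icc.mpr ⟨hj, le_rfl⟩)).trans (Nat.le_add_right _ _)
  obtain ⟨u, hu⟩ := Nat.exists_eq_add_of_le' hnm
  have hsub : m j - n j = u := by omega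
  have hblk := hblock j hj
  rw [hsub] at hblk ⊢
  obtain ⟨hs, hs'⟩ := den'_mirror h0 hblk
  rw [← hu] at hs hs'
  change den (pq Φ) (m j) = den (pq Θ) (n j) * den (pq Φ) u + _ at hs
  change _ = num' (pq Θ) (n j + 1) * den (pq Φ) u + _ at hs'
  have hq := den_ne_zero ha (n j)
  have hsu := den_ne_zero hb u
  have hlt₁ := degree_den'_lt ha (n j)
  have hlt₂ := degree_den'_lt hb u
  change _ < (den (pq Θ) (n j)).degree at hlt₁
  change _ < (den (pq Φ) u).degree at hlt₂
  have hdegs : (den (pq Φ) (m j)).natDegree =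
      (den (pq Θ) (n j)).natDegree + (den (pq Φ) u).natDegree := by
    rw [← natDegree_mul hq hsu, hs]
    apply natDegree_add_eq_left_of_degree_lt
    rw [degree_mul, degree_mul]
    refine (add_le_add_left hlt₁.le _).trans_lt ?_
    exact WithBot.add_lt_add_left (degree_ne_bot.mpr hq) hlt₂
  have hdu : (den (pq Φ) u).natDegree ≤ (M + 2) * u :=
    natDegree_den_le hb fun i h₁ h₂ => hbound j hj i h₁ (by omega)
  constructor
  · have key : ∀ i < 2 * ((den (pq Θ) (n j)).natDegree : ℤ) - (den (pq Φ) (m j)).natDegree,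
        (emb (den (pq Φ) (m j)) * Θ - emb (den' (pq Φ) (m j))).coeff i = 0 := by
      intro i hi
      have hsplit : emb (den (pq Φ) (m j)) * Θ - emb (den' (pq Φ) (m j)) =
          (emb (den' (pq Θ) (n j + 1)) * Θ - emb (num' (pq Θ) (n j + 1))) * emb (den (pq Φ) u) +
          (emb (den' (pq Θ) (n j)) * Θ - emb (num' (pq Θ) (n j))) * emb (den' (pq Φ) u) := by
        have hadd : ∀ p q r s : Polynomial k,
            emb (p * q + r * s) = emb p * emb q + emb r * emb s := by simp [emb]
        rw [hs, hs', hadd, hadd]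
        change (emb (den' (pq Θ) (n j + 1)) * _ + _) * _ - _ = _
        ring
      have hle : (den' (pq Φ) u).natDegree ≤ (den (pq Φ) u).natDegree :=
        natDegree_le_natDegree hlt₂.le
      have hmono := natDegree_den_succ ha (n j)
      rw [hsplit, HahnSeries.coeff_add,
        coeff_mul_eq_zero (coeff_den'_mul_sub_num' hΘ (n j + 1))
          (fun _ => emb_coeff_eq_zero (den (pq Φ) u)) i (by omega),
        coeff_mul_eq_zero (coeff_den'_mul_sub_num' hΘ (n j))
          (fun _ => emb_coeff_eq_zero (den' (pq Φ) u)) i (by omega), add_zero]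
    exact (fnorm_le_of_coeff_sub _ key).trans_eq (by rw [neg_sub])
  · rw [lnorm_emb (den_ne_zero hb (m j)), ← zpow_neg, ← zpow_natCast,
      ← zpow_add₀ (by norm_num)]
    refine zpow_le_zpow_right₀ (by norm_num) ?_
    rw [hdegs]
    have : ((den (pq Φ) u).natDegree : ℤ) ≤ (M + 2) * u := by exact_mod_cast hdu
    push_cast
    linarith

end Littlewood
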